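/- For every integer a ≥ 3, ∫₀^{π/2} cos³(x)·sin((2a+1)x)·cos(x)/sin(x) dx = π/2; equivalently, with e₀(x) := 4·√(2/π)·cos³(x), ∫₀^{π/2} e₀(x)·sin((2a+1)x)·cos(x)/sin(x) dx = 2·√(2π) for all integers a ≥ 3. -/

import Mathlib

open Real MeasureTheory

/-- The lowest AdS linearized eigenfunction `e₀(x) = 4·√(2/π)·cos³(x)`. -/
noncomputable def e₀ (x : ℝ) : ℝ := 4 * Real.sqrt (2 / Real.pi) * Real.cos x ^ 3

noncomputable def DK : ℕ → ℝ → ℝ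
  | 0, _ => 1
  | n + 1, x => DK n x + 2 * Real.cos (2 * ((n + 1 : ℕ) : ℤ) * x)

lemma DK_cont (n : ℕ) : Continuous (DK n) := by
  induction n with
  | zero => exact continuous_const
  | succ n ih =>
    have : DK (n + 1) = fun x => DK n x + 2 * Real.cos (2 * ((n + 1 : ℕ) : ℤ) * x) := rfl
    rw [this]; fun_prop

lemma DK_sin (n : ℕ) (x : ℝ) : Real.sin ((2 * (n : ℝ) + 1) * x) = DK n x * Real.sin x := by
  induction n with
  | zero => simp [DK]
  | succ n ih =>
    rw [DK, add_mul (DK n x), ← ih]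
    push_cast
    have h1 : (2 * ((n : ℝ) + 1) + 1) * x = 2 * ((n : ℝ) + 1) * x + x := by ring
    have h2 : (2 * (n : ℝ) + 1) * x = 2 * ((n : ℝ) + 1) * x - x := by ring
    rw [h1, h2, Real.sin_add, Real.sin_sub]; ring

lemma cInt (m : ℤ) : (∫ x in (0 : ℝ)..(π / 2), Real.cos (2 * (m : ℝ) * x)) =
    if m = 0 then π / 2 else 0 := by
  split_ifs with h
  · simp [h]
  · have h' : (2 * (m : ℝ)) ≠ 0 := by
      have : (m : ℝ) ≠ 0 := by exact_mod_cast h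
      positivity
    rw [intervalIntegral.integral_comp_mul_left (fun y => Real.cos y) h', integral_cos]
    have : 2 * (m : ℝ) * (π / 2) = m * π := by ring
    rw [this, Real.sin_int_mul_pi]; simp

lemma JInt (m : ℤ) : (∫ x in (0 : ℝ)..(π / 2), Real.cos x ^ 4 * Real.cos (2 * (m : ℝ) * x)) =
    3 / 8 * (if m = 0 then π / 2 else 0) + 1 / 4 * (if m + 1 = 0 then π / 2 else 0)
     + 1 / 4 * (if m - 1 = 0 then π / 2 else 0) + 1 / 16 * (if m + 2 = 0 then π / 2 else 0)
     + 1 / 16 * (if m - 2 = 0 then π / 2 else 0) := by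
  simp only [← cInt]
  have hi : ∀ (c : ℝ) (k : ℤ), IntervalIntegrable (fun x : ℝ => c * Real.cos (2 * (k : ℝ) * x))
      volume 0 (π / 2) := fun c k => Continuous.intervalIntegrable (by fun_prop) _ _
  simp only [← intervalIntegral.integral_const_mul]
  rw [← intervalIntegral.integral_add (hi _ _) (hi _ _),
    ← intervalIntegral.integral_add ((hi _ _).add (hi _ _)) (hi _ _),
    ← intervalIntegral.integral_add (((hi _ _).add (hi _ _)).add (hi _ _)) (hi _ _),
    ← intervalIntegral.integral_add ((((hi _ _).add (hi _ _)).add (hi _ _)).add (hi _ _)) (hi _ _)]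
  congr 1
  funext x
  push_cast
  have e1 : 2 * ((m : ℝ) + 1) * x = 2 * m * x + 2 * x := by ring
  have e2 : 2 * ((m : ℝ) - 1) * x = 2 * m * x - 2 * x := by ring
  have e3 : 2 * ((m : ℝ) + 2) * x = 2 * m * x + 2 * (2 * x) := by ring
  have e4 : 2 * ((m : ℝ) - 2) * x = 2 * m * x - 2 * (2 * x) := by ring
  rw [e1, e2, e3, e4]
  simp only [Real.cos_add, Real.cos_sub]
  rw [Real.cos_two_mul (2 * x), Real.cos_two_mul x]
  ring

lemma KInt (n : ℕ) : (∫ x in (0 : ℝ)..(π / 2), Real.cos x ^ 4 * DK (n + 2) x) = π / 2 := by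
  have step : ∀ n : ℕ, (∫ x in (0 : ℝ)..(π / 2), Real.cos x ^ 4 * DK (n + 1) x) =
      (∫ x in (0 : ℝ)..(π / 2), Real.cos x ^ 4 * DK n x) +
      2 * ∫ x in (0 : ℝ)..(π / 2), Real.cos x ^ 4 * Real.cos (2 * (((n + 1 : ℕ) : ℤ) : ℝ) * x) := by
    intro n
    have := DK_cont n
    rw [← intervalIntegral.integral_const_mul, ← intervalIntegral.integral_add
      (Continuous.intervalIntegrable (by fun_prop) _ _)
      (Continuous.intervalIntegrable (by fun_prop) _ _)]
    congr 1
    funext x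
    rw [DK]; ring
  induction n with
  | zero =>
    have h0 := JInt 0
    rw [step, step, JInt, JInt]
    simp [DK] at h0 ⊢
    rw [h0]; ring
  | succ n ih =>
    rw [step, ih, JInt]
    have a1 : ¬ (((n + 2 + 1 : ℕ) : ℤ) = 0) := by omega
    have a2 : ¬ (((n + 2 + 1 : ℕ) : ℤ) + 1 = 0) := by omega
    have a3 : ¬ (((n + 2 + 1 : ℕ) : ℤ) - 1 = 0) := by omega
    have a4 : ¬ (((n + 2 + 1 : ℕ) : ℤ) + 2 = 0) := by omega
    have a5 : ¬ (((n + 2 + 1 : ℕ) : ℤ) - 2 = 0) := by omega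
    rw [if_neg a1, if_neg a2, if_neg a3, if_neg a4, if_neg a5]; ring

/-- For every integer `a ≥ 3`, `∫₀^{π/2} cos³(x)·sin((2a+1)x)·cos(x)/sin(x) dx = π/2`;
equivalently, with `e₀(x) = 4√(2/π) cos³(x)`,
`∫₀^{π/2} e₀(x)·sin((2a+1)x)·cos(x)/sin(x) dx = 2√(2π)`. -/
theorem oscillatory_integral_cos_cubed_sin_odd_over_tan (a : ℕ) (ha : 3 ≤ a) :
    (∫ x in Set.Ioo (0 : ℝ) (Real.pi / 2),
        Real.cos x ^ 3 * (Real.sin ((2 * (a : ℝ) + 1) * x) * Real.cos x / Real.sin x)) =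
      Real.pi / 2 ∧
    (∫ x in Set.Ioo (0 : ℝ) (Real.pi / 2),
        e₀ x * (Real.sin ((2 * (a : ℝ) + 1) * x) * Real.cos x / Real.sin x)) =
      2 * Real.sqrt (2 * Real.pi) := by
  have main : (∫ x in Set.Ioo (0 : ℝ) (Real.pi / 2),
        Real.cos x ^ 3 * (Real.sin ((2 * (a : ℝ) + 1) * x) * Real.cos x / Real.sin x)) =
      Real.pi / 2 := by
    obtain ⟨n, rfl⟩ : ∃ n, a = n + 2 := ⟨a - 2, by omega⟩
    refine Eq.trans ?_ (KInt n)
    rw [intervalIntegral.integral_of_le (by positivity), integral_Ioc_eq_integral_Ioo]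
    apply setIntegral_congr_fun measurableSet_Ioo
    intro x hx
    have hs : Real.sin x ≠ 0 :=
      (Real.sin_pos_of_pos_of_lt_pi hx.1 (by linarith [hx.2, Real.pi_pos])).ne'
    simp only [DK_sin]
    field_simp
  refine ⟨main, ?_⟩
  simp only [e₀, mul_assoc (4 * Real.sqrt (2 / Real.pi))]
  rw [integral_const_mul, main]
  have hp := Real.pi_pos
  have : Real.sqrt (2 * π) = Real.sqrt (2 / π) * π := by
    rw [show 2 * π = 2 / π * π ^ 2 by field_simp, Real.sqrt_mul (by positivity),
      Real.sqrt_sq hp.le]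
  rw [this]; ring
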